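/- Let C ⊆ X be closed. Then sup { −h(μ)/∫Λ dμ : μ ∈ 𝒫_S(Σ^ℕ), Uμ ∈ C } ≤ f̲^{U,Λ}(C). -/

import Mathlib

open MeasureTheory Filter Topology Metric Set
open scoped ENNReal NNReal Classical

namespace Multifractal

/-- Infinite strings over `{1,…,N}`. -/
abbrev Seq (N : ℕ) := ℕ → Fin N

/-- Finite strings over `{1,…,N}` (the empty string is excluded where appropriate). -/
abbrev Word (N : ℕ) := List (Fin N)

variable {N : ℕ}

/-- The shift map on `Σ^ℕ`. -/
def shift : Seq N → Seq N := fun x n => x (n + 1)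

/-- The cylinder `[w]` generated by a finite string `w`. -/
def cylinder (w : Word N) : Set (Seq N) :=
  {x : Seq N | ∀ (k : ℕ) (h : k < w.length), x k = w.get ⟨k, h⟩}

/-- Birkhoff sum `∑_{k<n} φ(S^k x)`. -/
noncomputable def birkhoff (φ : Seq N → ℝ) (n : ℕ) (x : Seq N) : ℝ :=
  ∑ k ∈ Finset.range n, φ (shift^[k] x)

/-- `s_w = sup_{x ∈ [w]} exp (∑_{k<|w|} Λ(S^k x))`. -/
noncomputable def sWord (Λ : Seq N → ℝ) (w : Word N) : ℝ :=
  sSup ((fun x => Real.exp (birkhoff Λ w.length x)) '' cylinder w)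

/-- Bounded distortion (condition (C3)): `exp(S_nΛ(i))/exp(S_nΛ(j)) ∈ [1/c, c]`
whenever `i|n = j|n`.  (By symmetry in `i,j` the one-sided bound suffices.) -/
def BddDistortion (Λ : Seq N → ℝ) (c : ℝ) : Prop :=
  ∀ (n : ℕ) (i j : Seq N), (∀ k < n, i k = j k) →
    Real.exp (birkhoff Λ n i) ≤ c * Real.exp (birkhoff Λ n j)

/-- The empirical measure `L_n x = (1/n) ∑_{k<n} δ_{S^k x}` (junk value `δ_x` for `n = 0`). -/
noncomputable def emp (n : ℕ) (x : Seq N) : ProbabilityMeasure (Seq N) :=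
  if h : n = 0 then ⟨Measure.dirac x, inferInstance⟩
  else
    ⟨(n : ℝ≥0∞)⁻¹ • ∑ k ∈ Finset.range n, Measure.dirac (shift^[k] x), by
      constructor
      simp only [Measure.smul_apply, Measure.coe_finset_sum, Finset.sum_apply, measure_univ,
        Finset.sum_const, Finset.card_range, nsmul_eq_mul, mul_one, smul_eq_mul]
      exact ENNReal.inv_mul_cancel (Nat.cast_ne_zero.mpr h) (ENNReal.natCast_ne_top n)⟩

/-- Shift invariance of a probability measure. -/
def Invariant (μ : ProbabilityMeasure (Seq N)) : Prop :=
  μ.toMeasure.map shift = μ.toMeasure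

/-- `n`-th partition entropy `-∑_{|w|=n} μ[w] log μ[w]`. -/
noncomputable def entropyAux (μ : ProbabilityMeasure (Seq N)) (n : ℕ) : ℝ :=
  -∑ w : Fin n → Fin N,
      (μ (cylinder (List.ofFn w)) : ℝ) * Real.log (μ (cylinder (List.ofFn w)) : ℝ)

/-- The Kolmogorov–Sinai entropy of a (shift-invariant) measure on the full shift,
via the generating partition into cylinders. -/
noncomputable def entropy (μ : ProbabilityMeasure (Seq N)) : ℝ :=
  Filter.atTop.liminf fun n => entropyAux μ n / n

/-- Abscissa of convergence of the "zeta-function" `s ↦ ∑ a_w^s`, the sum ranging over the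
nonempty finite strings satisfying `P`; values in `EReal` (so `⊤` if never summable and `⊥`
if always summable, e.g. for an empty index set). -/
noncomputable def sigmaAbs (a : Word N → ℝ) (P : Word N → Prop) : EReal :=
  sInf ((fun t : ℝ => (t : EReal)) ''
    {t : ℝ | Summable fun w : {w : Word N // w ≠ [] ∧ P w} => a w.1 ^ t})

variable {X : Type*}

/-- `U(L_{|w|}[w]) ⊆ B`. -/
def inTarget (U : ProbabilityMeasure (Seq N) → X) (B : Set X) (w : Word N) : Prop :=
  ∀ x ∈ cylinder w, U (emp w.length x) ∈ B

/-- The closed `r`-neighbourhood `B(C,r)` of a set. -/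
def cball [MetricSpace X] (C : Set X) (r : ℝ) : Set X := {x | infDist x C ≤ r}

/-- The counting function `N_δ^{U,Λ}(C,r)`: number of strings `w` with `s_w ≈ δ` and
`U(L_{|w|}[w]) ⊆ B(C,r)`. -/
noncomputable def Ncount [MetricSpace X] (Λ : Seq N → ℝ) (U : ProbabilityMeasure (Seq N) → X)
    (C : Set X) (r δ : ℝ) : ℕ :=
  Set.ncard {w : Word N | w ≠ [] ∧ sWord Λ w ≤ δ ∧ δ < sWord Λ w.dropLast ∧
    inTarget U (cball C r) w}

/-- `log m / (-log δ)`, read as `-∞` when `m = 0`. -/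
noncomputable def ratioE (m : ℕ) (δ : ℝ) : EReal :=
  if m = 0 then ⊥ else (((Real.log m) / (-Real.log δ) : ℝ) : EReal)

/-- The `r`-approximate lower coarse multifractal spectrum `f̲^{U,Λ}(C,r)`. -/
noncomputable def coarseLowerR [MetricSpace X] (Λ : Seq N → ℝ)
    (U : ProbabilityMeasure (Seq N) → X) (C : Set X) (r : ℝ) : EReal :=
  Filter.liminf (fun δ : ℝ => ratioE (Ncount Λ U C r δ) δ) (𝓝[>] (0 : ℝ))

/-- The lower coarse multifractal spectrum `f̲^{U,Λ}(C) = lim_{r↘0} f̲^{U,Λ}(C,r)`;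
since `f̲^{U,Λ}(C,r)` is nondecreasing in `r`, the limit is the infimum over `r > 0`. -/
noncomputable def coarseLower [MetricSpace X] (Λ : Seq N → ℝ)
    (U : ProbabilityMeasure (Seq N) → X) (C : Set X) : EReal :=
  ⨅ (r : ℝ) (_ : 0 < r), coarseLowerR Λ U C r

/-- The variational quantity `sup { -h(μ)/∫Λ dμ : μ shift-invariant, Uμ ∈ C }`. -/
noncomputable def varSup (Λ : Seq N → ℝ) (U : ProbabilityMeasure (Seq N) → X)
    (C : Set X) : EReal :=
  sSup {x : EReal | ∃ μ : ProbabilityMeasure (Seq N), Invariant μ ∧ U μ ∈ C ∧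
    x = ((-(entropy μ) / ∫ y, Λ y ∂μ.toMeasure : ℝ) : EReal)}

end Multifractal

namespace Multifractal

section LawOfLargeNumbers

variable {A : Type*} [Fintype A]

theorem sum_prod_mul_sum_eq_zero (p g : A → ℝ) (hp : ∑ a, p a = 1) (hg : ∑ a, p a * g a = 0)
    (m : ℕ) : ∑ w : Fin m → A, (∏ j, p (w j)) * ∑ j, g (w j) = 0 := by
  induction m with
  | zero => simp
  | succ m ih =>
    rw [← (Fin.consEquiv (fun _ => A)).sum_comp, Fintype.sum_prod_type]
    have hone : ∑ w : Fin m → A, ∏ j, p (w j) = 1 := by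
      rw [← Fintype.sum_pow, hp, one_pow]
    have key : ∀ a : A, ∑ w : Fin m → A, (∏ j, p ((Fin.consEquiv (fun _ => A)) (a, w) j)) *
        ∑ j, g ((Fin.consEquiv (fun _ => A)) (a, w) j) = p a * g a := by
      intro a
      simp only [Fin.consEquiv_apply, Fin.prod_univ_succ, Fin.sum_univ_succ, Fin.cons_zero,
        Fin.cons_succ]
      calc _ = p a * g a * (∑ w : Fin m → A, ∏ j, p (w j))
            + p a * ∑ w : Fin m → A, (∏ j, p (w j)) * ∑ j, g (w j) := by
            rw [Finset.mul_sum, Finset.mul_sum, ← Finset.sum_add_distrib]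
            exact Finset.sum_congr rfl fun w _ => by ring
        _ = _ := by rw [hone, ih]; ring
    rw [Finset.sum_congr rfl fun a _ => key a, hg]

theorem sum_prod_mul_sum_sq (p g : A → ℝ) (hp : ∑ a, p a = 1) (hg : ∑ a, p a * g a = 0)
    (m : ℕ) : ∑ w : Fin m → A, (∏ j, p (w j)) * (∑ j, g (w j)) ^ 2
      = m * ∑ a, p a * g a ^ 2 := by
  induction m with
  | zero => simp
  | succ m ih =>
    rw [← (Fin.consEquiv (fun _ => A)).sum_comp, Fintype.sum_prod_type]
    have hone : ∑ w : Fin m → A, ∏ j, p (w j) = 1 := by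
      rw [← Fintype.sum_pow, hp, one_pow]
    have key : ∀ a : A, ∑ w : Fin m → A, (∏ j, p ((Fin.consEquiv (fun _ => A)) (a, w) j)) *
        (∑ j, g ((Fin.consEquiv (fun _ => A)) (a, w) j)) ^ 2
          = p a * g a ^ 2 + p a * (m * ∑ a, p a * g a ^ 2) := by
      intro a
      simp only [Fin.consEquiv_apply, Fin.prod_univ_succ, Fin.sum_univ_succ, Fin.cons_zero,
        Fin.cons_succ]
      calc _ = p a * g a ^ 2 * (∑ w : Fin m → A, ∏ j, p (w j))
            + 2 * p a * g a * (∑ w : Fin m → A, (∏ j, p (w j)) * ∑ j, g (w j))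
            + p a * ∑ w : Fin m → A, (∏ j, p (w j)) * (∑ j, g (w j)) ^ 2 := by
            rw [Finset.mul_sum, Finset.mul_sum, Finset.mul_sum, ← Finset.sum_add_distrib,
              ← Finset.sum_add_distrib]
            exact Finset.sum_congr rfl fun w _ => by ring
        _ = _ := by rw [hone, ih, sum_prod_mul_sum_eq_zero p g hp hg]; ring
    rw [Finset.sum_congr rfl fun a _ => key a, Finset.sum_add_distrib, ← Finset.sum_mul, hp]
    push_cast
    ring

/-- A weak law of large numbers for finitely many functions on a finite probability space. -/
theorem eventually_exists_typical {ι : Type*} [Fintype ι] (p : A → ℝ) (hp0 : ∀ a, 0 ≤ p a)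
    (hp : ∑ a, p a = 1) (g : ι → A → ℝ) {η : ℝ} (hη : 0 < η) :
    ∀ᶠ m : ℕ in atTop, ∃ T : Finset (Fin m → A),
      1 / 2 ≤ ∑ w ∈ T, ∏ j, p (w j) ∧
      ∀ w ∈ T, ∀ i, |∑ j, g i (w j) - m * ∑ a, p a * g i a| ≤ η * m := by
  set e : ι → ℝ := fun i => ∑ a, p a * g i a with he
  set V : ℝ := ∑ i, ∑ a, p a * (g i a - e i) ^ 2 with hV
  have hV0 : 0 ≤ V := Finset.sum_nonneg fun i _ => Finset.sum_nonneg fun a _ =>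
    mul_nonneg (hp0 a) (sq_nonneg _)
  have hlarge : ∀ᶠ m : ℕ in atTop, 2 * V / η ^ 2 ≤ m :=
    tendsto_natCast_atTop_atTop.eventually_ge_atTop _
  filter_upwards [hlarge, eventually_gt_atTop 0] with m hm hm0
  have hm0' : (0 : ℝ) < m := by exact_mod_cast hm0
  set Q : (Fin m → A) → ℝ := fun w => ∑ i, (∑ j, (g i (w j) - e i)) ^ 2 with hQ
  set P : (Fin m → A) → ℝ := fun w => ∏ j, p (w j) with hP
  have hP0 : ∀ w, 0 ≤ P w := fun w => Finset.prod_nonneg fun j _ => hp0 _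
  have hPone : ∑ w, P w = 1 := by
    rw [hP, ← Fintype.sum_pow, hp, one_pow]
  have hEQ : ∑ w, P w * Q w = m * V := by
    simp only [hQ, Finset.mul_sum, hV]
    rw [Finset.sum_comm]
    refine Finset.sum_congr rfl fun i _ => ?_
    rw [← Finset.mul_sum, ← sum_prod_mul_sum_sq p (fun a => g i a - e i) hp]
    simp only [mul_sub, Finset.sum_sub_distrib, ← Finset.sum_mul, hp, he]
    ring
  have hQ0 : ∀ w, 0 ≤ Q w := fun w => Finset.sum_nonneg fun i _ => sq_nonneg _
  have hηm : 0 < (η * m) ^ 2 := by positivity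
  refine ⟨Finset.univ.filter fun w => Q w ≤ (η * m) ^ 2, ?_, ?_⟩
  · have hbad : (∑ w with ¬ Q w ≤ (η * m) ^ 2, P w) * (η * m) ^ 2 ≤ m * V := by
      rw [← hEQ, Finset.sum_mul]
      calc _ ≤ ∑ w with ¬ Q w ≤ (η * m) ^ 2, P w * Q w :=
            Finset.sum_le_sum fun w hw =>
              mul_le_mul_of_nonneg_left (not_le.1 (Finset.mem_filter.1 hw).2).le (hP0 w)
        _ ≤ _ := Finset.sum_le_sum_of_subset_of_nonneg (Finset.filter_subset _ _)
              fun w _ _ => mul_nonneg (hP0 w) (hQ0 w)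
    have hsplit := Finset.sum_filter_add_sum_filter_not Finset.univ
      (fun w => Q w ≤ (η * m) ^ 2) P
    rw [hPone] at hsplit
    have hhalf : m * V ≤ 1 / 2 * (η * m) ^ 2 := by
      rw [div_le_iff₀ (by positivity)] at hm
      nlinarith
    have := le_of_mul_le_mul_right (hbad.trans hhalf) hηm
    change 1 / 2 ≤ ∑ w with Q w ≤ (η * m) ^ 2, P w
    linarith
  · intro w hw i
    have h1 := (Finset.mem_filter.1 hw).2
    have h2 : (∑ j, (g i (w j) - e i)) ^ 2 ≤ (η * m) ^ 2 :=
      (Finset.single_le_sum (f := fun i => (∑ j, (g i (w j) - e i)) ^ 2)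
        (fun i _ => sq_nonneg _) (Finset.mem_univ i)).trans h1
    have h3 := abs_le_of_sq_le_sq h2 (by positivity)
    rw [Finset.sum_sub_distrib] at h3
    simp only [Finset.sum_const, Finset.card_univ, Fintype.card_fin, nsmul_eq_mul] at h3
    exact h3

/-- Typical sequences are numerous: their number is at least `exp (m (H - η)) / 2`. -/
theorem eventually_exists_typical_card {ι : Type*} [Fintype ι] (p : A → ℝ) (hp0 : ∀ a, 0 ≤ p a)
    (hp : ∑ a, p a = 1) (g : ι → A → ℝ) {η : ℝ} (hη : 0 < η) :
    ∀ᶠ m : ℕ in atTop, ∃ T : Finset (Fin m → A),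
      1 / 2 * Real.exp (m * (-∑ a, p a * Real.log (p a) - η)) ≤ T.card ∧
      ∀ w ∈ T, ∀ i, |∑ j, g i (w j) - m * ∑ a, p a * g i a| ≤ η * m := by
  filter_upwards [eventually_exists_typical p hp0 hp
    (fun i : Option ι => i.elim (fun a => Real.log (p a)) g) hη] with m ⟨T, hT, hT'⟩
  refine ⟨T, ?_, fun w hw i => hT' w hw (some i)⟩
  set E := m * (-∑ a, p a * Real.log (p a) - η) with hE
  have hle : ∀ w ∈ T, ∏ j, p (w j) ≤ Real.exp (-E) := by
    intro w hw
    have h1 := (abs_le.1 (hT' w hw none)).2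
    simp only [Option.elim_none] at h1
    calc ∏ j, p (w j) ≤ ∏ j, Real.exp (Real.log (p (w j))) :=
          Finset.prod_le_prod (fun j _ => hp0 _) fun j _ => Real.le_exp_log _
      _ = Real.exp (∑ j, Real.log (p (w j))) := (Real.exp_sum _ _).symm
      _ ≤ _ := Real.exp_le_exp.2 (by rw [hE]; linarith)
  have h2 := hT.trans (Finset.sum_le_card_nsmul T _ _ hle)
  rw [nsmul_eq_mul, Real.exp_neg, ← div_eq_mul_inv, le_div_iff₀ (Real.exp_pos _)] at h2
  exact h2

end LawOfLargeNumbers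

section Shift

variable {N : ℕ} {X : Type*}

theorem iterate_shift_apply (k : ℕ) (x : Seq N) (i : ℕ) : (shift^[k] x) i = x (k + i) := by
  induction k generalizing x with
  | zero => simp
  | succ k ih =>
    rw [Function.iterate_succ_apply, ih]
    exact congrArg x (by omega)

theorem continuous_shift : Continuous (shift : Seq N → Seq N) :=
  continuous_pi fun i => continuous_apply (i + 1)

theorem birkhoff_add (φ : Seq N → ℝ) (a b : ℕ) (x : Seq N) :
    birkhoff φ (a + b) x = birkhoff φ a x + birkhoff φ b (shift^[a] x) := by
  unfold birkhoff
  rw [Finset.sum_range_add]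
  congr 1
  refine Finset.sum_congr rfl fun k _ => ?_
  rw [← Function.iterate_add_apply, add_comm]

theorem birkhoff_mul (φ : Seq N → ℝ) (m n : ℕ) (x : Seq N) :
    birkhoff φ (m * n) x = ∑ j : Fin m, birkhoff φ n (shift^[j * n] x) := by
  rw [Fin.sum_univ_eq_sum_range fun j => birkhoff φ n (shift^[j * n] x)]
  induction m with
  | zero => simp [birkhoff]
  | succ m ih => rw [add_mul, one_mul, birkhoff_add, ih, Finset.sum_range_succ]

theorem abs_birkhoff_le {φ : Seq N → ℝ} {M : ℝ} (hφ : ∀ x, |φ x| ≤ M) (n : ℕ) (x : Seq N) :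
    |birkhoff φ n x| ≤ n * M := by
  refine (Finset.abs_sum_le_sum_abs _ _).trans ?_
  simpa using Finset.sum_le_card_nsmul (Finset.range n) _ M fun k _ => hφ (shift^[k] x)

theorem birkhoff_le {φ : Seq N → ℝ} {M : ℝ} (hφ : ∀ x, φ x ≤ M) (n : ℕ) (x : Seq N) :
    birkhoff φ n x ≤ n * M := by
  simpa [birkhoff] using Finset.sum_le_card_nsmul (Finset.range n) _ M fun k _ => hφ (shift^[k] x)

theorem continuous_birkhoff {φ : Seq N → ℝ} (hφ : Continuous φ) (n : ℕ) :
    Continuous (birkhoff φ n) :=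
  continuous_finsetSum _ fun k _ => hφ.comp (continuous_shift.iterate k)

/-- A continuous function on the shift space varies little on long cylinders. -/
theorem exists_forall_agree_abs_sub_le {φ : Seq N → ℝ} (hφ : Continuous φ) {ε : ℝ} (hε : 0 < ε) :
    ∃ K : ℕ, ∀ x y : Seq N, (∀ k < K, x k = y k) → |φ x - φ y| ≤ ε := by
  let _ : MetricSpace (Seq N) := PiNat.metricSpace
  have huc := CompactSpace.uniformContinuous_of_continuous hφ
  obtain ⟨δ, hδ, h⟩ := Metric.uniformContinuous_iff.1 huc ε hε
  obtain ⟨K, hK⟩ := exists_pow_lt_of_lt_one hδ (by norm_num : (1 / 2 : ℝ) < 1)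
  refine ⟨K, fun x y hxy => ?_⟩
  have hd : dist x y ≤ (1 / 2) ^ K :=
    PiNat.mem_cylinder_iff_dist_le.1 fun k hk => (hxy k hk)
  exact (Real.dist_eq (φ x) (φ y) ▸ h (hd.trans_lt hK)).le

/-- Birkhoff sums of a continuous function have sublinear variation on cylinders. -/
theorem eventually_abs_birkhoff_sub_le {φ : Seq N → ℝ} (hφ : Continuous φ) {M : ℝ}
    (hM : ∀ x, |φ x| ≤ M) {ε : ℝ} (hε : 0 < ε) :
    ∀ᶠ n : ℕ in atTop, ∀ x y : Seq N, (∀ k < n, x k = y k) →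
      |birkhoff φ n x - birkhoff φ n y| ≤ ε * n := by
  obtain ⟨K, hK⟩ := exists_forall_agree_abs_sub_le hφ (half_pos hε)
  have hlarge : ∀ᶠ n : ℕ in atTop, 2 * (K * (2 * M)) / ε ≤ n :=
    tendsto_natCast_atTop_atTop.eventually_ge_atTop _
  filter_upwards [hlarge, eventually_ge_atTop K] with n hn hnK x y hxy
  obtain ⟨l, rfl⟩ := Nat.exists_eq_add_of_le' hnK
  rw [birkhoff_add, birkhoff_add]
  have h1 : |birkhoff φ l x - birkhoff φ l y| ≤ l * (ε / 2) := by
    unfold birkhoff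
    rw [← Finset.sum_sub_distrib]
    refine (Finset.abs_sum_le_sum_abs _ _).trans ?_
    have := Finset.sum_le_card_nsmul (Finset.range l)
      (fun k => |φ (shift^[k] x) - φ (shift^[k] y)|) (ε / 2) fun k hk => by
        refine hK _ _ fun i hi => ?_
        rw [iterate_shift_apply, iterate_shift_apply]
        exact hxy _ (by have := Finset.mem_range.1 hk; omega)
    simpa using this
  have h2 := abs_birkhoff_le hM K (shift^[l] x)
  have h3 := abs_birkhoff_le hM K (shift^[l] y)
  rw [div_le_iff₀ hε] at hn
  have hK0 : (0 : ℝ) ≤ K * ε := by positivity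
  push_cast at hn ⊢
  rw [abs_le] at *
  constructor <;> nlinarith

theorem integral_emp (f : Seq N → ℝ) {n : ℕ} (hn : n ≠ 0) (x : Seq N) :
    ∫ y, f y ∂(emp n x).toMeasure = birkhoff f n x / n := by
  have : (emp n x).toMeasure =
      (n : ℝ≥0∞)⁻¹ • ∑ k ∈ Finset.range n, Measure.dirac (shift^[k] x) :=
    congrArg Subtype.val (dif_neg hn)
  rw [this, integral_smul_measure, integral_finsetSum_measure]
  · simp [birkhoff, div_eq_inv_mul]
  · intro k _
    exact (integrable_dirac (by simp))

theorem integral_birkhoff {μ : ProbabilityMeasure (Seq N)} (hμ : Invariant μ) {f : Seq N → ℝ}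
    (hf : Continuous f) (n : ℕ) :
    ∫ x, birkhoff f n x ∂μ.toMeasure = n * ∫ x, f x ∂μ.toMeasure := by
  have hmp : MeasurePreserving shift μ.toMeasure μ.toMeasure :=
    ⟨continuous_shift.measurable, hμ⟩
  have hcint : ∀ g : Seq N → ℝ, Continuous g → Integrable g μ.toMeasure := fun g hg =>
    (BoundedContinuousFunction.mkOfCompact ⟨g, hg⟩).integrable μ.toMeasure
  unfold birkhoff
  rw [integral_finsetSum _ fun k _ => hcint (fun x => f (shift^[k] x))
    (hf.comp (continuous_shift.iterate k))]
  have : ∀ k ∈ Finset.range n, ∫ x, f (shift^[k] x) ∂μ.toMeasure = ∫ x, f x ∂μ.toMeasure := by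
    intro k _
    have hk := hmp.iterate k
    rw [← integral_map hk.measurable.aemeasurable (hf.aestronglyMeasurable), hk.map_eq]
  rw [Finset.sum_congr rfl this]
  simp

/-- Weak neighbourhoods of a probability measure are controlled by finitely many integrals. -/
theorem exists_finite_forall_integral_mem_nhds {Ω : Type*} [MeasurableSpace Ω]
    [TopologicalSpace Ω] [OpensMeasurableSpace Ω] {μ : ProbabilityMeasure Ω}
    {V : Set (ProbabilityMeasure Ω)} (hV : V ∈ 𝓝 μ) :
    ∃ t : Set (BoundedContinuousFunction Ω ℝ), t.Finite ∧ ∀ ν : ProbabilityMeasure Ω,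
      (∀ f ∈ t, |∫ x, f x ∂ν.toMeasure - ∫ x, f x ∂μ.toMeasure| < 1) → ν ∈ V := by
  set s : BoundedContinuousFunction Ω ℝ → Set (ProbabilityMeasure Ω) := fun f =>
    {ν | |∫ x, f x ∂ν.toMeasure - ∫ x, f x ∂μ.toMeasure| < 1} with hs
  have hle : (⨅ f, 𝓟 (s f)) ≤ 𝓝 μ := by
    change Tendsto (fun ν => ν) (⨅ f, 𝓟 (s f)) (𝓝 μ)
    rw [ProbabilityMeasure.tendsto_iff_forall_integral_tendsto]
    intro f
    rw [Metric.tendsto_nhds]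
    intro ε hε
    refine Filter.mem_of_superset
      (Filter.mem_iInf_of_mem (ε⁻¹ • f) (Filter.mem_principal_self _)) fun ν hν => ?_
    simp only [hs, Set.mem_ofPred_eq, BoundedContinuousFunction.coe_smul,
      integral_const_mul, smul_eq_mul] at hν
    rw [← mul_sub, abs_mul, abs_of_pos (inv_pos.2 hε), inv_mul_lt_iff₀ hε, mul_one] at hν
    exact hν
  obtain ⟨t, ht, htV⟩ := (Filter.hasBasis_iInf_principal_finite s).mem_iff.1 (hle hV)
  exact ⟨t, ht, fun ν hν => htV (Set.mem_iInter₂.2 hν)⟩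

/-- The prefix of length `L` of an infinite string. -/
def initialWord (z : Seq N) (L : ℕ) : Word N := List.ofFn fun i : Fin L => z i

@[simp] theorem length_initialWord (z : Seq N) (L : ℕ) : (initialWord z L).length = L := by
  simp [initialWord]

theorem mem_cylinder_initialWord {z x : Seq N} {L : ℕ} :
    x ∈ cylinder (initialWord z L) ↔ ∀ k < L, x k = z k := by
  simp [cylinder, initialWord]

theorem self_mem_cylinder_initialWord (z : Seq N) (L : ℕ) : z ∈ cylinder (initialWord z L) :=
  mem_cylinder_initialWord.2 fun _ _ => rfl

theorem dropLast_initialWord (z : Seq N) (L : ℕ) :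
    (initialWord z (L + 1)).dropLast = initialWord z L := by
  unfold initialWord
  rw [List.ofFn_succ', List.concat_eq_append, List.dropLast_concat]
  rfl

theorem sWord_le_exp {Λ : Seq N → ℝ} {cmax : ℝ} (hΛ : ∀ x, Λ x ≤ cmax) (w : Word N) :
    sWord Λ w ≤ Real.exp (w.length * cmax) := by
  refine Real.sSup_le ?_ (Real.exp_pos _).le
  rintro _ ⟨x, -, rfl⟩
  exact Real.exp_le_exp.2 (birkhoff_le hΛ _ _)

theorem exp_birkhoff_le_sWord {Λ : Seq N → ℝ} {cmax : ℝ} (hΛ : ∀ x, Λ x ≤ cmax) {w : Word N}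
    {x : Seq N} (hx : x ∈ cylinder w) : Real.exp (birkhoff Λ w.length x) ≤ sWord Λ w := by
  refine le_csSup ⟨Real.exp (w.length * cmax), ?_⟩ ⟨x, hx, rfl⟩
  rintro _ ⟨y, -, rfl⟩
  exact Real.exp_le_exp.2 (birkhoff_le hΛ _ _)

theorem exists_lt_exp_birkhoff {Λ : Seq N → ℝ} {w : Word N} {δ : ℝ} (hδ : 0 < δ)
    (h : δ < sWord Λ w) : ∃ x ∈ cylinder w, δ < Real.exp (birkhoff Λ w.length x) := by
  by_contra! hcon
  refine h.not_ge (Real.sSup_le ?_ hδ.le)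
  rintro _ ⟨x, hx, rfl⟩
  exact hcon x hx

/-- Prefixes of an infinite string can be prolonged until they have size about `δ`. -/
theorem exists_stopping_length {Λ : Seq N → ℝ} {cmax : ℝ} (hcmax : cmax < 0)
    (hΛ : ∀ x, Λ x ≤ cmax) {δ : ℝ} (hδ : 0 < δ) (z : Seq N) (B : ℕ)
    (hB : δ < sWord Λ (initialWord z B)) :
    ∃ L, B ≤ L ∧ δ < sWord Λ (initialWord z L) ∧ sWord Λ (initialWord z (L + 1)) ≤ δ := by
  have hex : ∃ j, sWord Λ (initialWord z (B + j)) ≤ δ := by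
    obtain ⟨j, hj⟩ := exists_nat_ge (Real.log δ / cmax)
    refine ⟨j, (sWord_le_exp hΛ _).trans ?_⟩
    rw [← Real.le_log_iff_exp_le hδ, length_initialWord]
    rw [div_le_iff_of_neg hcmax] at hj
    push_cast
    have : (B : ℝ) * cmax ≤ 0 := mul_nonpos_of_nonneg_of_nonpos (by positivity) hcmax.le
    linarith
  obtain ⟨l, hl⟩ : ∃ l, Nat.find hex = l + 1 := by
    refine Nat.exists_eq_succ_of_ne_zero fun h0 => ?_
    have := Nat.find_spec hex
    rw [h0] at this
    exact absurd hB (not_lt.2 this)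
  refine ⟨B + l, by omega, not_le.1 (Nat.find_min hex (by omega)), ?_⟩
  have := Nat.find_spec hex
  rwa [hl] at this

theorem finite_stopping_words {Λ : Seq N → ℝ} {cmax : ℝ} (hcmax : cmax < 0)
    (hΛ : ∀ x, Λ x ≤ cmax) {δ : ℝ} (hδ : 0 < δ) :
    {w : Word N | δ < sWord Λ w.dropLast}.Finite := by
  obtain ⟨K, hK⟩ := exists_nat_ge (Real.log δ / cmax)
  refine (List.finite_length_le (Fin N) (K + 1)).subset fun w hw => ?_
  have h1 : δ < Real.exp (w.dropLast.length * cmax) := lt_of_lt_of_le hw (sWord_le_exp hΛ _)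
  rw [← Real.log_lt_iff_lt_exp hδ, ← lt_div_iff_of_neg hcmax] at h1
  have h2 : w.dropLast.length < K := by exact_mod_cast h1.trans_le hK
  rw [List.length_dropLast] at h2
  simp only [Set.mem_ofPred_eq]
  omega

/-- If pairwise distinguishable infinite strings all have prefixes longer than `B` which are
counted by `Ncount`, then there are at most `Ncount` of them. -/
theorem card_le_Ncount [MetricSpace X] {Λ : Seq N → ℝ} {cmax : ℝ} (hcmax : cmax < 0)
    (hΛ : ∀ x, Λ x ≤ cmax) (U : ProbabilityMeasure (Seq N) → X) (C : Set X) (r : ℝ) {δ : ℝ}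
    (hδ : 0 < δ) {ι : Type*} (T : Finset ι) (z : ι → Seq N) (B : ℕ)
    (hinj : ∀ a ∈ T, ∀ b ∈ T, (∀ k < B, z a k = z b k) → a = b)
    (h : ∀ a ∈ T, ∃ L, B ≤ L ∧ δ < sWord Λ (initialWord (z a) L) ∧
      sWord Λ (initialWord (z a) (L + 1)) ≤ δ ∧
      inTarget U (cball C r) (initialWord (z a) (L + 1))) :
    T.card ≤ Ncount Λ U C r δ := by
  choose! L hBL hlt hle htar using h
  rw [← Set.ncard_coe_finset T]
  unfold Ncount
  refine Set.ncard_le_ncard_of_injOn (fun a => initialWord (z a) (L a + 1)) ?_ ?_ ?_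
  · intro a ha
    refine ⟨?_, hle a ha, ?_, htar a ha⟩
    · rw [← List.length_pos_iff_ne_nil, length_initialWord]
      omega
    · rw [dropLast_initialWord]
      exact hlt a ha
  · intro a ha b hb hab
    have ha' := self_mem_cylinder_initialWord (z a) (L a + 1)
    simp only at hab
    rw [hab, mem_cylinder_initialWord] at ha'
    exact hinj a ha b hb fun k hk => ha' k (by have := hBL b hb; omega)
  · exact (finite_stopping_words hcmax hΛ hδ).subset fun w hw => hw.2.2.1

theorem sum_cylinder_mul (μ : ProbabilityMeasure (Seq N)) (n : ℕ) (G : (Fin n → Fin N) → ℝ) :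
    ∑ w : Fin n → Fin N, (μ (cylinder (List.ofFn w)) : ℝ) * G w
      = ∫ x, G (fun i => x i) ∂μ.toMeasure := by
  have hπ : Measurable fun (x : Seq N) (i : Fin n) => x i :=
    measurable_pi_lambda _ fun i => measurable_pi_apply _
  have : IsProbabilityMeasure (μ.toMeasure.map fun (x : Seq N) (i : Fin n) => x i) :=
    Measure.isProbabilityMeasure_map hπ.aemeasurable
  rw [← integral_map (f := G) hπ.aemeasurable (measurable_of_finite G).aestronglyMeasurable,
    integral_fintype (Integrable.of_finite)]
  refine Finset.sum_congr rfl fun w _ => ?_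
  rw [smul_eq_mul, map_measureReal_apply hπ (measurableSet_singleton w)]
  congr 2
  have : cylinder (List.ofFn w) = (fun (x : Seq N) (i : Fin n) => x i) ⁻¹' {w} := by
    ext x
    simp only [cylinder, List.length_ofFn, List.get_ofFn, Set.mem_ofPred_eq, Set.mem_preimage,
      Set.mem_singleton_iff, funext_iff]
    exact ⟨fun h i => h i i.2, fun h k hk => h ⟨k, hk⟩⟩
  rw [this]
  rfl

theorem sum_cylinder (μ : ProbabilityMeasure (Seq N)) (n : ℕ) :
    ∑ w : Fin n → Fin N, (μ (cylinder (List.ofFn w)) : ℝ) = 1 := by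
  simpa using sum_cylinder_mul μ n fun _ => 1

theorem entropyAux_nonneg (μ : ProbabilityMeasure (Seq N)) (n : ℕ) : 0 ≤ entropyAux μ n := by
  unfold entropyAux
  rw [neg_nonneg]
  refine Finset.sum_nonpos fun w _ => Real.mul_log_nonpos (by positivity) ?_
  exact_mod_cast ProbabilityMeasure.apply_le_one μ _

/-- The infinite string beginning with `w` and continued by a fixed letter. -/
def padWord (hN : 0 < N) {n : ℕ} (w : Fin n → Fin N) : Seq N :=
  fun k => if h : k < n then w ⟨k, h⟩ else ⟨0, hN⟩

theorem padWord_apply (hN : 0 < N) {n : ℕ} (w : Fin n → Fin N) (i : Fin n) :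
    padWord hN w i = w i := by
  simp [padWord]

theorem exists_seq_of_blocks (hN : 0 < N) {m n : ℕ} (w : Fin m → Fin n → Fin N) :
    ∃ z : Seq N, ∀ (j : Fin m) (i : Fin n), z (j * n + i) = w j i := by
  refine ⟨padWord hN fun k : Fin (m * n) =>
    w (finProdFinEquiv.symm k).1 (finProdFinEquiv.symm k).2, fun j i => ?_⟩
  have h := padWord_apply hN (fun k : Fin (m * n) =>
    w (finProdFinEquiv.symm k).1 (finProdFinEquiv.symm k).2) (finProdFinEquiv (j, i))
  rw [Equiv.symm_apply_apply, finProdFinEquiv_apply_val] at h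
  rw [← h]
  congr 1
  ring

/-- Concatenations of typical blocks of an invariant measure `μ`: there are many of them, and
their Birkhoff averages are close to the integrals with respect to `μ`. -/
theorem eventually_exists_typical_blocks (hN : 0 < N) {μ : ProbabilityMeasure (Seq N)}
    (hμ : Invariant μ) (F : Finset (BoundedContinuousFunction (Seq N) ℝ)) {ε : ℝ} (hε : 0 < ε) :
    ∀ᶠ n : ℕ in atTop, ∀ᶠ m : ℕ in atTop, ∃ T : Finset (Fin m → Fin n → Fin N),
      1 / 2 * Real.exp (m * (entropyAux μ n - ε)) ≤ T.card ∧
      ∀ w ∈ T, ∀ x : Seq N, (∀ (j : Fin m) (i : Fin n), x (j * n + i) = w j i) → ∀ f ∈ F,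
        |birkhoff f (m * n) x - (m * n : ℕ) * ∫ y, f y ∂μ.toMeasure| ≤ ε * (m * n : ℕ) := by
  have hε3 : 0 < ε / 3 := by positivity
  have hvar : ∀ᶠ n : ℕ in atTop, ∀ f ∈ F, ∀ x y : Seq N, (∀ k < n, x k = y k) →
      |birkhoff f n x - birkhoff f n y| ≤ ε / 3 * n :=
    (Filter.eventually_all_finset F).2 fun f _ =>
      eventually_abs_birkhoff_sub_le f.continuous (fun x => f.norm_coe_le_norm x) hε3
  filter_upwards [hvar, eventually_ge_atTop 1] with n hn hn1
  have hn1' : (1 : ℝ) ≤ n := by exact_mod_cast hn1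
  set p : (Fin n → Fin N) → ℝ := fun w => (μ (cylinder (List.ofFn w)) : ℝ) with hp
  have hmean : ∀ f ∈ F, |∑ w, p w * birkhoff f n (padWord hN w)
      - n * ∫ y, f y ∂μ.toMeasure| ≤ ε / 3 * n := by
    intro f hf
    have hcont : Continuous fun x : Seq N =>
        birkhoff f n (padWord hN fun i : Fin n => x i) := by
      refine (continuous_of_discreteTopology (f := fun w : Fin n → Fin N =>
        birkhoff f n (padWord hN w))).comp (continuous_pi fun i => continuous_apply _)
    have hcint : ∀ g : Seq N → ℝ, Continuous g → Integrable g μ.toMeasure := fun g hg =>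
      (BoundedContinuousFunction.mkOfCompact ⟨g, hg⟩).integrable μ.toMeasure
    rw [hp, sum_cylinder_mul μ n fun w => birkhoff f n (padWord hN w),
      ← integral_birkhoff hμ f.continuous n,
      ← integral_sub (hcint _ hcont) (hcint _ (continuous_birkhoff f.continuous n))]
    have h := norm_integral_le_of_norm_le_const (μ := μ.toMeasure) (C := ε / 3 * n)
      (f := fun x => birkhoff f n (padWord hN fun i : Fin n => x i) - birkhoff f n x)
      (Filter.Eventually.of_forall fun x => hn f hf _ _ fun k hk =>
        padWord_apply hN (fun i : Fin n => x i) ⟨k, hk⟩)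
    simpa using h
  filter_upwards [eventually_exists_typical_card p (fun w => by positivity) (sum_cylinder μ n)
    (fun (f : F) w => birkhoff f.1 n (padWord hN w)) hε3] with m ⟨T, hcard, hT⟩
  refine ⟨T, le_trans ?_ hcard, fun w hw x hx f hf => ?_⟩
  · change _ ≤ 1 / 2 * Real.exp (m * (entropyAux μ n - ε / 3))
    gcongr
    linarith
  · have h1 := hT w hw ⟨f, hf⟩
    have h2 := hmean f hf
    have h3 : |birkhoff f (m * n) x - ∑ j, birkhoff f n (padWord hN (w j))|
        ≤ m * (ε / 3 * n) := by
      rw [birkhoff_mul, ← Finset.sum_sub_distrib]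
      refine (Finset.abs_sum_le_sum_abs _ _).trans ?_
      have := Finset.sum_le_card_nsmul (Finset.univ : Finset (Fin m))
        (fun j => |birkhoff f n (shift^[j * n] x) - birkhoff f n (padWord hN (w j))|)
        (ε / 3 * n) fun j _ => by
          refine hn f hf _ _ fun k hk => ?_
          rw [iterate_shift_apply, hx j ⟨k, hk⟩]
          exact (padWord_apply hN (w j) ⟨k, hk⟩).symm
      simpa using this
    have hm0 : (0 : ℝ) ≤ m := Nat.cast_nonneg m
    have h4 : |m * (∑ w, p w * birkhoff f n (padWord hN w))
        - m * (n * ∫ y, f y ∂μ.toMeasure)| ≤ m * (ε / 3 * n) := by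
      rw [← mul_sub, abs_mul, abs_of_nonneg hm0]
      exact mul_le_mul_of_nonneg_left h2 hm0
    have h5 : ε / 3 * m ≤ m * (ε / 3 * n) := by
      nlinarith [mul_nonneg hm0 hε3.le]
    simp only at h1
    push_cast
    rw [abs_le] at *
    constructor <;> linarith [h1.1, h1.2, h3.1, h3.2, h4.1, h4.2]

/-- If a Birkhoff sum of length `B` is close to `B * I`, then the average over a slightly longer
time is close to `I`. -/
theorem abs_birkhoff_div_sub_lt_one {f : Seq N → ℝ} {M I ε κ : ℝ} (hf : ∀ x, |f x| ≤ M)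
    (hI : |I| ≤ M) (hκ : 0 < κ) (hM : 0 ≤ M) (hε : ε * (1 + 10 * M / κ) < 1) {B L : ℕ}
    (hB : 0 < B) (hBL : B ≤ L) (hL : (L - B : ℝ) * κ ≤ 5 * ε * B) {x : Seq N}
    (hx : |birkhoff f B x - B * I| ≤ ε * B) : |birkhoff f L x / L - I| < 1 := by
  obtain ⟨l, rfl⟩ := Nat.exists_eq_add_of_le hBL
  have hB' : (0 : ℝ) < B := by exact_mod_cast hB
  have hl0 : (0 : ℝ) ≤ l := Nat.cast_nonneg l
  have hLpos : (0 : ℝ) < (B + l : ℕ) := by push_cast; linarith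
  have h1 := abs_birkhoff_le hf l (shift^[B] x)
  have h2 : |l * I| ≤ l * M := by
    rw [abs_mul, abs_of_nonneg hl0]
    exact mul_le_mul_of_nonneg_left hI hl0
  have h3 : (l : ℝ) * M ≤ ε * (5 * M / κ) * B := by
    have : (l : ℝ) ≤ 5 * ε * B / κ := by
      rw [le_div_iff₀ hκ]
      push_cast at hL
      linarith
    calc (l : ℝ) * M ≤ 5 * ε * B / κ * M := mul_le_mul_of_nonneg_right this hM
      _ = _ := by ring
  have h4 : |birkhoff f (B + l) x - (B + l : ℕ) * I| < (B + l : ℕ) := by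
    rw [birkhoff_add]
    have h5 : ε * B + 2 * (ε * (5 * M / κ) * B) < B := by
      have := mul_lt_mul_of_pos_right hε hB'
      calc _ = ε * (1 + 10 * M / κ) * B := by ring
        _ < B := by linarith
    push_cast
    rw [abs_le] at *
    rw [abs_lt]
    constructor <;> linarith [h1.1, h1.2, h2.1, h2.2, hx.1, hx.2]
  have h6 : birkhoff f (B + l) x / (B + l : ℕ) - I
      = (birkhoff f (B + l) x - (B + l : ℕ) * I) / (B + l : ℕ) := by
    field_simp
  rw [h6, abs_div, abs_of_pos hLpos, div_lt_one hLpos]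
  exact h4

theorem eventually_le_ratioE (hN : 0 < N) [MetricSpace X] {Λ : Seq N → ℝ} (hΛcont : Continuous Λ)
    {cmax : ℝ} (hcmax : cmax < 0) (hΛ : ∀ x, Λ x ≤ cmax)
    {U : ProbabilityMeasure (Seq N) → X} (hU : Continuous U) {C : Set X}
    {μ : ProbabilityMeasure (Seq N)} (hμ : Invariant μ) (hμC : U μ ∈ C) {r : ℝ} (hr : 0 < r)
    {t : ℝ} (ht : t < -(entropy μ) / ∫ y, Λ y ∂μ.toMeasure) :
    ∀ᶠ δ in 𝓝[>] (0 : ℝ), (t : EReal) ≤ ratioE (Ncount Λ U C r δ) δ := by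
  set Λb : BoundedContinuousFunction (Seq N) ℝ :=
    BoundedContinuousFunction.mkOfCompact ⟨Λ, hΛcont⟩ with hΛb
  have hΛbΛ : ⇑Λb = Λ := rfl
  obtain ⟨α, hα⟩ : ∃ α, α = -∫ y, Λ y ∂μ.toMeasure := ⟨_, rfl⟩
  have hα0 : 0 < α := by
    have : ∫ y, Λ y ∂μ.toMeasure ≤ ∫ _, cmax ∂μ.toMeasure :=
      integral_mono (Λb.integrable μ.toMeasure) (integrable_const _) hΛ
    simp only [integral_const, probReal_univ, one_smul] at this
    linarith
  have hΛint : ∫ y, Λ y ∂μ.toMeasure = -α := by linarith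
  have hκ : 0 < -cmax := neg_pos.2 hcmax
  obtain ⟨κ, hκdef⟩ : ∃ κ, κ = -cmax := ⟨_, rfl⟩
  rw [← hκdef] at hκ
  rw [hΛint, neg_div_neg_eq, lt_div_iff₀ hα0] at ht
  obtain ⟨g, hg⟩ : ∃ g, g = entropy μ - t * α := ⟨_, rfl⟩
  have hg0 : 0 < g := by linarith
  have hV : U ⁻¹' cball C r ∈ 𝓝 μ := by
    have hcont : Continuous fun ν => infDist (U ν) C := (continuous_infDist_pt C).comp hU
    have h0 : infDist (U μ) C < r := by rwa [infDist_zero_of_mem hμC]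
    filter_upwards [hcont.continuousAt.eventually_lt_const h0] with ν hν using hν.le
  obtain ⟨F₀, hF₀, hF₀V⟩ := exists_finite_forall_integral_mem_nhds hV
  obtain ⟨M, hM0, hM⟩ : ∃ M : ℝ, 0 ≤ M ∧ ∀ f ∈ F₀, ‖f‖ ≤ M := by
    obtain ⟨M, hM⟩ := (hF₀.image fun f => ‖f‖).bddAbove
    exact ⟨max M 0, le_max_right _ _, fun f hf => (hM ⟨f, hf, rfl⟩).trans (le_max_left _ _)⟩
  obtain ⟨ε, hε, hεg, hεM⟩ : ∃ ε : ℝ, 0 < ε ∧ ε * (2 * (1 + |t|)) < g / 2 ∧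
      ε * (1 + 10 * M / κ) < 1 := by
    have e1 : Tendsto (fun ε : ℝ => ε * (2 * (1 + |t|))) (𝓝[>] 0) (𝓝 (0 * (2 * (1 + |t|)))) :=
      (tendsto_nhdsWithin_of_tendsto_nhds tendsto_id).mul_const _
    have e2 : Tendsto (fun ε : ℝ => ε * (1 + 10 * M / κ)) (𝓝[>] 0) (𝓝 (0 * (1 + 10 * M / κ))) :=
      (tendsto_nhdsWithin_of_tendsto_nhds tendsto_id).mul_const _
    rw [zero_mul] at e1 e2
    exact (eventually_mem_nhdsWithin.and ((e1.eventually_lt_const (half_pos hg0)).and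
      (e2.eventually_lt_const one_pos))).exists
  have hentropy : ∀ᶠ n : ℕ in atTop, entropy μ - ε < entropyAux μ n / n :=
    eventually_lt_of_lt_liminf (by change _ < entropy μ; linarith)
      (isBoundedUnder_of ⟨0, fun n => div_nonneg (entropyAux_nonneg μ n) n.cast_nonneg⟩)
  obtain ⟨n, hblocks, hn, hn1⟩ := ((eventually_exists_typical_blocks hN hμ
    (insert Λb hF₀.toFinset) hε).and (hentropy.and (eventually_ge_atTop 1))).exists
  have hn1' : (1 : ℝ) ≤ n := by exact_mod_cast hn1
  have hn0 : (0 : ℝ) < n := by linarith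
  rw [lt_div_iff₀ hn0] at hn
  obtain ⟨a, ha⟩ : ∃ a, a = α + 2 * ε := ⟨_, rfl⟩
  have ha0 : 0 < a := by linarith
  have hlarge : ∀ K : ℝ, ∀ᶠ m : ℕ in atTop, K ≤ (m * n : ℕ) := fun K => by
    filter_upwards [tendsto_natCast_atTop_atTop.eventually_ge_atTop K] with m hm
    push_cast
    nlinarith [(Nat.cast_nonneg m : (0 : ℝ) ≤ m)]
  have hD : Tendsto (fun δ : ℝ => -Real.log δ) (𝓝[>] 0) atTop :=
    tendsto_neg_atBot_atTop.comp Real.tendsto_log_nhdsGT_zero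
  have hfloor : Tendsto (fun δ : ℝ => ⌊-Real.log δ / (n * a)⌋₊) (𝓝[>] 0) atTop :=
    tendsto_nat_floor_atTop.comp (hD.atTop_div_const (by positivity))
  filter_upwards [hfloor.eventually (hblocks.and ((eventually_ge_atTop 1).and
      ((hlarge (n * a / ε)).and ((hlarge (κ / ε)).and
        (hlarge ((Real.log 2 + |t| * (n * a)) / (g / 2))))))),
    hD.eventually_gt_atTop 0, eventually_mem_nhdsWithin] with δ hδ hDpos hδ0
  obtain ⟨D, hDdef⟩ : ∃ D, D = -Real.log δ := ⟨_, rfl⟩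
  have hδ0 : 0 < δ := hδ0
  rw [← hDdef] at hδ hDpos
  obtain ⟨m, hm⟩ : ∃ m, m = ⌊D / (n * a)⌋₊ := ⟨_, rfl⟩
  rw [← hm] at hδ
  obtain ⟨⟨T, hTcard, hT⟩, hm1, hB1, hB2, hB3⟩ := hδ
  have hmB : (m : ℝ) * n = (m * n : ℕ) := by push_cast; rfl
  have hBpos : 0 < m * n := Nat.mul_pos hm1 hn1
  have hTcard' : 1 / 2 * Real.exp ((m * n : ℕ) * (entropy μ - 2 * ε)) ≤ T.card := by
    refine le_trans ?_ hTcard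
    have h1 : (m : ℝ) * ((entropy μ - ε) * n - ε) ≤ m * (entropyAux μ n - ε) := by
      gcongr
    have h2 : (m : ℝ) * ε ≤ m * (n * ε) := by
      gcongr
      nlinarith
    refine mul_le_mul_of_nonneg_left (Real.exp_le_exp.2 ?_) (by norm_num)
    rw [← hmB]
    linarith
  have hDlow : (m * n : ℕ) * a ≤ D := by
    have := Nat.floor_le (a := D / (n * a)) (by positivity)
    rw [← hm, le_div_iff₀ (by positivity)] at this
    rw [← hmB]
    linarith
  have hDup : D ≤ (m * n : ℕ) * a + n * a := by
    have := (Nat.lt_floor_add_one (D / (n * a))).le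
    rw [← hm, div_le_iff₀ (by positivity)] at this
    rw [← hmB]
    linarith
  obtain ⟨B, hB⟩ : ∃ B, B = m * n := ⟨_, rfl⟩
  rw [← hB] at hB1 hB2 hB3 hBpos hTcard' hDlow hDup hT
  rw [div_le_iff₀ hε] at hB1 hB2
  rw [div_le_iff₀ (by positivity)] at hB3
  have hB0 : (0 : ℝ) < B := by exact_mod_cast hBpos
  choose z hz using fun w : Fin m → Fin n → Fin N => exists_seq_of_blocks hN w
  have hagree : ∀ w ∈ T, ∀ x : Seq N, (∀ k < B, x k = z w k) →
      ∀ f ∈ insert Λb hF₀.toFinset,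
        |birkhoff f B x - B * ∫ y, f y ∂μ.toMeasure| ≤ ε * B := by
    intro w hw x hx
    refine hT w hw x fun j i => ?_
    rw [hx _ ?_, hz]
    calc (j : ℕ) * n + i < j * n + n := by omega
      _ = (j + 1) * n := by ring
      _ ≤ m * n := Nat.mul_le_mul_right n j.2
      _ = B := hB.symm
  have hcount : T.card ≤ Ncount Λ U C r δ := by
    refine card_le_Ncount hcmax hΛ U C r hδ0 T z B ?_ ?_
    · intro w _ w' _ h
      funext j i
      rw [← hz w j i, ← hz w' j i]
      refine h _ ?_
      calc (j : ℕ) * n + i < j * n + n := by omega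
        _ = (j + 1) * n := by ring
        _ ≤ m * n := Nat.mul_le_mul_right n j.2
        _ = B := hB.symm
    · intro w hw
      have hΛx : ∀ x : Seq N, (∀ k < B, x k = z w k) → |birkhoff Λ B x + B * α| ≤ ε * B := by
        intro x hx
        have := hagree w hw x hx Λb (Finset.mem_insert_self _ _)
        rwa [hΛbΛ, hΛint, mul_neg, sub_neg_eq_add] at this
      have hstart : δ < sWord Λ (initialWord (z w) B) := by
        refine lt_of_lt_of_le ?_ (exp_birkhoff_le_sWord hΛ (self_mem_cylinder_initialWord _ _))
        rw [← Real.log_lt_iff_lt_exp hδ0, length_initialWord]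
        have := (abs_le.1 (hΛx (z w) fun _ _ => rfl)).1
        rw [ha] at hDlow
        nlinarith [mul_pos hε hB0]
      obtain ⟨L, hBL, hlt, hle⟩ := exists_stopping_length hcmax hΛ hδ0 (z w) B hstart
      refine ⟨L, hBL, hlt, hle, ?_⟩
      have hLB : ((L + 1 : ℕ) - B : ℝ) * κ ≤ 5 * ε * B := by
        obtain ⟨x, hx, hδx⟩ := exists_lt_exp_birkhoff hδ0 hlt
        rw [mem_cylinder_initialWord] at hx
        rw [length_initialWord, ← Real.log_lt_iff_lt_exp hδ0] at hδx
        have h1 := (abs_le.1 (hΛx x fun k hk => hx k (hk.trans_le hBL))).2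
        obtain ⟨l, rfl⟩ := Nat.exists_eq_add_of_le hBL
        rw [birkhoff_add] at hδx
        have h2 := birkhoff_le hΛ l (shift^[B] x)
        have h3 : (l : ℝ) * cmax = -(l * κ) := by rw [hκdef]; ring
        rw [ha] at hDup hB1
        push_cast
        linarith
      intro x hx
      rw [mem_cylinder_initialWord] at hx
      rw [length_initialWord]
      refine hF₀V _ fun f hf => ?_
      rw [integral_emp f (Nat.succ_ne_zero L)]
      refine abs_birkhoff_div_sub_lt_one (fun y => (f.norm_coe_le_norm y).trans (hM f hf)) ?_ hκ
        hM0 hεM hBpos (by omega) hLB (hagree w hw x (fun k hk => hx k (by omega)) f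
          (Finset.mem_insert_of_mem (hF₀.mem_toFinset.2 hf)))
      exact (f.norm_integral_le_norm μ.toMeasure).trans (hM f hf)
  have hlow : 1 / 2 * Real.exp (B * (entropy μ - 2 * ε)) ≤ Ncount Λ U C r δ :=
    hTcard'.trans (by exact_mod_cast hcount)
  have hNpos : (0 : ℝ) < Ncount Λ U C r δ := lt_of_lt_of_le (by positivity) hlow
  have hN0 : Ncount Λ U C r δ ≠ 0 := by
    intro h
    simp [h] at hNpos
  have hlog := Real.log_le_log (by positivity) hlow
  rw [Real.log_mul (by norm_num) (Real.exp_pos _).ne', Real.log_exp, one_div, Real.log_inv]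
    at hlog
  unfold ratioE
  rw [if_neg hN0, EReal.coe_le_coe_iff, ← hDdef, le_div_iff₀ hDpos]
  have htD : t * D ≤ t * (B * a) + |t| * (n * a) := by
    have h1 : t * (D - B * a) ≤ |t| * (n * a) :=
      (mul_le_mul_of_nonneg_right (le_abs_self t) (by linarith)).trans
        (mul_le_mul_of_nonneg_left (by linarith) (abs_nonneg t))
    linarith
  have hgap : (B : ℝ) * (g / 2) ≤ B * (entropy μ - 2 * ε - t * a) := by
    refine mul_le_mul_of_nonneg_left ?_ hB0.le
    have := mul_le_mul_of_nonneg_left (le_abs_self t) hε.le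
    rw [ha]
    linarith
  linarith

end Shift

/-- **Theorem 6.6.** `sup { -h(μ)/∫Λ dμ : μ ∈ 𝒫_S(Σ^ℕ), Uμ ∈ C } ≤ f̲^{U,Λ}(C)`. -/
theorem varSup_le_coarseLower
    {N : ℕ} (hN : 0 < N) {X : Type*} [MetricSpace X]
    (Λ : Seq N → ℝ) (hΛcont : Continuous Λ)
    (cmin cmax : ℝ) (hcmax : cmax < 0) (hccmin : cmin ≤ cmax)
    (hΛbdd : ∀ x, Λ x ∈ Set.Icc cmin cmax)
    (c : ℝ) (hc : 1 ≤ c) (hdist : BddDistortion Λ c)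
    (U : ProbabilityMeasure (Seq N) → X) (hU : Continuous U)
    (C : Set X) (hC : IsClosed C) :
    varSup Λ U C ≤ coarseLower Λ U C := by
  refine sSup_le ?_
  rintro _ ⟨μ, hμ, hμC, rfl⟩
  refine le_iInf₂ fun r hr => ?_
  refine EReal.ge_of_forall_gt_iff_ge.1 fun t ht => ?_
  exact Filter.le_liminf_of_le (by isBoundedDefault) (eventually_le_ratioE hN hΛcont hcmax
    (fun x => (hΛbdd x).2) hU hμ hμC hr (EReal.coe_lt_coe_iff.1 ht))

end Multifractal
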